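/- arXiv:1602.04769 — 2 statements merged into one kernel-verified Lean document; each statement's English description precedes it below -/
import Mathlib

section
/- Let A and B be categories, let F : A ⥤ B be a functor admitting a right adjoint G : B ⥤ A. If there exists a natural isomorphism α : 𝟭_A ≅ F ⋙ G (α is not required to be the unit of the adjunction), then F is fully faithful. -/
open CategoryTheory

/-- Opposite version of Johnstone's Lemma 1.1.1: if `F` has a right adjoint `G` and the
identity functor of `A` is (abstractly) isomorphic to `F ⋙ G`, then `F` is fully faithful. -/
theorem full_and_faithful_of_iso_id_comp {A : Type*} {B : Type*} [Category A] [Category B]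
    (F : A ⥤ B) (G : B ⥤ A) (adj : F ⊣ G) (α : Functor.id A ≅ F ⋙ G) :
    F.Full ∧ F.Faithful := by
  -- Transported along `α`, the monad of `adj` lives on `𝟭 A`, whose endomorphisms commute, so the
  -- unit law makes the multiplication a two-sided inverse of the unit.
  have hF : F.FullyFaithful := adj.fullyFaithfulLOfCompIsoId α.symm
  exact ⟨hF.full, hF.faithful⟩
end

section
/- Let R be a commutative ring and w ∈ R a nonzerodivisor. Then every factorization F = (F₁, F₀, φ₁, φ₀) of w over R admits a surjective morphism of factorizations p : E → F such that multiplication by w is injective on both components of E and on both components of the kernel of p. Explicitly, choosing free R-modules E₁, E₀ with surjections p₁ : E₁ ↠ F₁ and p₀ : E₀ ↠ F₀, the tuple E := (E₁ ⊕ E₀, E₁ ⊕ E₀, w•id_{E₁} ⊕ id_{E₀}, id_{E₁} ⊕ w•id_{E₀}) is a factorization of w, the pair given by (p₁ + φ₀∘p₀ on the first component, φ₁∘p₁ + p₀ on the second) is a surjective morphism E → F, and the components of E and of ker(p) are w-torsion-free. -/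
universe u

/-- A factorization of `w` over a commutative ring `R`. -/
structure Factorization (R : Type u) [CommRing R] (w : R) : Type (u + 1) where
  M1 : Type u
  M0 : Type u
  [acg1 : AddCommGroup M1]
  [acg0 : AddCommGroup M0]
  [mod1 : Module R M1]
  [mod0 : Module R M0]
  φ1 : M1 →ₗ[R] M0
  φ0 : M0 →ₗ[R] M1
  comp10 : φ0 ∘ₗ φ1 = w • LinearMap.id
  comp01 : φ1 ∘ₗ φ0 = w • LinearMap.id

attribute [instance] Factorization.acg1 Factorization.acg0 Factorization.mod1 Factorization.mod0

theorem coprod_comp_prodMap {R M M' N N' P : Type*} [Semiring R]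
    [AddCommMonoid M] [AddCommMonoid M'] [AddCommMonoid N] [AddCommMonoid N'] [AddCommMonoid P]
    [Module R M] [Module R M'] [Module R N] [Module R N'] [Module R P]
    (f : N →ₗ[R] P) (f' : N' →ₗ[R] P) (g : M →ₗ[R] N) (g' : M' →ₗ[R] N') :
    f.coprod f' ∘ₗ g.prodMap g' = (f ∘ₗ g).coprod (f' ∘ₗ g') :=
  rfl

namespace Factorization

variable {R : Type u} [CommRing R] {w : R}

/-- The affine form of `W`-flatness of a factorization: `w` acts injectively on both components. -/
structure IsWFlat (E : Factorization R w) : Prop where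
  isSMulRegular_M1 : IsSMulRegular E.M1 w
  isSMulRegular_M0 : IsSMulRegular E.M0 w

/-- A morphism of factorizations of `w`. -/
structure Hom (E F : Factorization R w) where
  f1 : E.M1 →ₗ[R] F.M1
  f0 : E.M0 →ₗ[R] F.M0
  comm1 : f0 ∘ₗ E.φ1 = F.φ1 ∘ₗ f1
  comm0 : f1 ∘ₗ E.φ0 = F.φ0 ∘ₗ f0

namespace Hom

variable {E F : Factorization R w}

/-- Surjectivity of a morphism of factorizations, understood componentwise. -/
structure Surjective (p : E.Hom F) : Prop where
  surjective_f1 : Function.Surjective p.f1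
  surjective_f0 : Function.Surjective p.f0

theorem φ1_mem_ker (p : E.Hom F) {x : E.M1} (hx : x ∈ p.f1.ker) : E.φ1 x ∈ p.f0.ker := by
  rw [LinearMap.mem_ker, ← LinearMap.comp_apply, p.comm1, LinearMap.comp_apply,
    LinearMap.mem_ker.mp hx, map_zero]

theorem φ0_mem_ker (p : E.Hom F) {x : E.M0} (hx : x ∈ p.f0.ker) : E.φ0 x ∈ p.f1.ker := by
  rw [LinearMap.mem_ker, ← LinearMap.comp_apply, p.comm0, LinearMap.comp_apply,
    LinearMap.mem_ker.mp hx, map_zero]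

/-- The kernel of a morphism of factorizations: the componentwise kernels, with the structure maps
restricted from the source. -/
def ker (p : E.Hom F) : Factorization R w where
  M1 := p.f1.ker
  M0 := p.f0.ker
  φ1 := E.φ1.restrict fun _ => p.φ1_mem_ker
  φ0 := E.φ0.restrict fun _ => p.φ0_mem_ker
  comp10 := LinearMap.ext fun x => Subtype.ext (LinearMap.congr_fun E.comp10 x)
  comp01 := LinearMap.ext fun x => Subtype.ext (LinearMap.congr_fun E.comp01 x)

theorem isWFlat_ker (p : E.Hom F) (hE : E.IsWFlat) : p.ker.IsWFlat where
  isSMulRegular_M1 := hE.isSMulRegular_M1.submodule p.f1.ker w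
  isSMulRegular_M0 := hE.isSMulRegular_M0.submodule p.f0.ker w

end Hom

section FreeOn

variable {E1 E0 : Type u} [AddCommGroup E1] [AddCommGroup E0] [Module R E1] [Module R E0]

variable (w E1 E0) in
/-- The free factorization on a pair of modules, `E1` being placed in the first component and `E0`
in the second. The remaining summands are the images of the generators: `φ1` identifies the two
copies of `E1`, and `φ0` the two copies of `E0`. -/
def freeOn : Factorization R w where
  M1 := E1 × E0
  M0 := E1 × E0
  φ1 := LinearMap.prodMap LinearMap.id (w • LinearMap.id)
  φ0 := LinearMap.prodMap (w • LinearMap.id) LinearMap.id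
  comp10 := by
    rw [LinearMap.prodMap_comp, LinearMap.comp_id, LinearMap.id_comp, LinearMap.prodMap_smul,
      LinearMap.prodMap_id]
  comp01 := by
    rw [LinearMap.prodMap_comp, LinearMap.comp_id, LinearMap.id_comp, LinearMap.prodMap_smul,
      LinearMap.prodMap_id]

theorem isWFlat_freeOn (h1 : IsSMulRegular E1 w) (h0 : IsSMulRegular E0 w) :
    (freeOn w E1 E0).IsWFlat where
  isSMulRegular_M1 := Prod.isSMulRegular_iff.mpr ⟨h1, h0⟩
  isSMulRegular_M0 := Prod.isSMulRegular_iff.mpr ⟨h1, h0⟩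

variable {F : Factorization R w}

/-- The morphism out of the free factorization that extends a pair of linear maps on generators. -/
def freeLift (p1 : E1 →ₗ[R] F.M1) (p0 : E0 →ₗ[R] F.M0) : (freeOn w E1 E0).Hom F where
  f1 := LinearMap.coprod p1 (F.φ0 ∘ₗ p0)
  f0 := LinearMap.coprod (F.φ1 ∘ₗ p1) p0
  comm1 := by
    have h_φ1_φ0 : F.φ1 ∘ₗ F.φ0 ∘ₗ p0 = w • p0 := by
      rw [← LinearMap.comp_assoc, F.comp01, LinearMap.smul_comp, LinearMap.id_comp]
    calc (F.φ1 ∘ₗ p1).coprod p0 ∘ₗ LinearMap.id.prodMap (w • LinearMap.id)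
        = (F.φ1 ∘ₗ p1).coprod (w • p0) := by
          rw [coprod_comp_prodMap, LinearMap.comp_id, LinearMap.comp_smul, LinearMap.comp_id]
      _ = F.φ1 ∘ₗ p1.coprod (F.φ0 ∘ₗ p0) := by rw [LinearMap.comp_coprod, h_φ1_φ0]
  comm0 := by
    have h_φ0_φ1 : F.φ0 ∘ₗ F.φ1 ∘ₗ p1 = w • p1 := by
      rw [← LinearMap.comp_assoc, F.comp10, LinearMap.smul_comp, LinearMap.id_comp]
    calc p1.coprod (F.φ0 ∘ₗ p0) ∘ₗ (w • LinearMap.id).prodMap LinearMap.id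
        = (w • p1).coprod (F.φ0 ∘ₗ p0) := by
          rw [coprod_comp_prodMap, LinearMap.comp_smul, LinearMap.comp_id, LinearMap.comp_id]
      _ = F.φ0 ∘ₗ (F.φ1 ∘ₗ p1).coprod p0 := by rw [LinearMap.comp_coprod, h_φ0_φ1]

theorem surjective_freeLift {p1 : E1 →ₗ[R] F.M1} {p0 : E0 →ₗ[R] F.M0}
    (hp1 : Function.Surjective p1) (hp0 : Function.Surjective p0) :
    (freeLift p1 p0).Surjective where
  surjective_f1 := by
    rw [← LinearMap.range_eq_top] at hp1 ⊢
    exact (LinearMap.range_coprod _ _).trans (by rw [hp1, top_sup_eq])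
  surjective_f0 := by
    rw [← LinearMap.range_eq_top] at hp0 ⊢
    exact (LinearMap.range_coprod _ _).trans (by rw [hp0, sup_top_eq])

end FreeOn

end Factorization

theorem exists_wflat_resolution_general {R : Type u} [CommRing R] {w : R} (F : Factorization R w)
    {E1 E0 : Type u} [AddCommGroup E1] [AddCommGroup E0] [Module R E1] [Module R E0]
    (h1 : IsSMulRegular E1 w) (h0 : IsSMulRegular E0 w)
    (p1 : E1 →ₗ[R] F.M1) (p0 : E0 →ₗ[R] F.M0)
    (hp1 : Function.Surjective p1) (hp0 : Function.Surjective p0) :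
    ∃ p : (Factorization.freeOn w E1 E0).Hom F,
      p.f1 = LinearMap.coprod p1 (F.φ0 ∘ₗ p0) ∧
      p.f0 = LinearMap.coprod (F.φ1 ∘ₗ p1) p0 ∧
      p.Surjective ∧ (Factorization.freeOn w E1 E0).IsWFlat ∧ p.ker.IsWFlat :=
  have hE := Factorization.isWFlat_freeOn h1 h0
  ⟨Factorization.freeLift p1 p0, rfl, rfl, Factorization.surjective_freeLift hp1 hp0, hE,
    Factorization.Hom.isWFlat_ker _ hE⟩

/-- **Affine content of the first paragraph of the proof of Lemma 3.10.**
If `w` is a nonzerodivisor, then every factorization `F` of `w` admits a surjection from a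
factorization with `w`-torsion-free components, whose kernel also has `w`-torsion-free
components.  Explicitly, choosing free modules `E₁, E₀` with surjections `p₁ : E₁ ↠ F₁` and
`p₀ : E₀ ↠ F₀`, the tuple `E := (E₁ ⊕ E₀, E₁ ⊕ E₀, φ₁ᴱ, φ₀ᴱ)` (where one structure map is
`w•id_{E₁} ⊕ id_{E₀}` and the other is `id_{E₁} ⊕ w•id_{E₀}`) is a factorization of `w`, the
pair `p = (p₁ + φ₀∘p₀, φ₁∘p₁ + p₀)` is a surjective morphism of factorizations `E → F`, and
the components of `E` and of `ker p` are `w`-torsion-free. -/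
theorem exists_wflat_resolution {R : Type u} [CommRing R] {w : R}
    (hw : w ∈ nonZeroDivisors R) (F : Factorization R w)
    (E1 E0 : Type u) [AddCommGroup E1] [AddCommGroup E0] [Module R E1] [Module R E0]
    [Module.Free R E1] [Module.Free R E0]
    (p1 : E1 →ₗ[R] F.M1) (p0 : E0 →ₗ[R] F.M0)
    (hp1 : Function.Surjective p1) (hp0 : Function.Surjective p0) :
    ∃ (φE1 φE0 : E1 × E0 →ₗ[R] E1 × E0)
      (f1 : E1 × E0 →ₗ[R] F.M1) (f0 : E1 × E0 →ₗ[R] F.M0),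
      -- the explicit structure maps of `E`
      φE1 = LinearMap.prodMap LinearMap.id (w • LinearMap.id) ∧
      φE0 = LinearMap.prodMap (w • LinearMap.id) LinearMap.id ∧
      -- the explicit components of `p`
      f1 = LinearMap.coprod p1 (F.φ0 ∘ₗ p0) ∧
      f0 = LinearMap.coprod (F.φ1 ∘ₗ p1) p0 ∧
      -- `E` is a factorization of `w`
      φE0 ∘ₗ φE1 = w • LinearMap.id ∧
      φE1 ∘ₗ φE0 = w • LinearMap.id ∧
      -- `p = (f1, f0)` is a morphism of factorizations `E → F`
      f0 ∘ₗ φE1 = F.φ1 ∘ₗ f1 ∧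
      f1 ∘ₗ φE0 = F.φ0 ∘ₗ f0 ∧
      -- `p` is surjective
      Function.Surjective f1 ∧
      Function.Surjective f0 ∧
      -- the components of `E` are `w`-torsion-free
      Function.Injective (fun v : E1 × E0 => w • v) ∧
      -- the components of `ker p` are `w`-torsion-free
      Function.Injective (fun v : ↥(LinearMap.ker f1) => w • v) ∧
      Function.Injective (fun v : ↥(LinearMap.ker f0) => w • v) := by
  obtain ⟨p, h_f1, h_f0, ⟨hs1, hs0⟩, ⟨hE, -⟩, hk1, hk0⟩ :=
    exists_wflat_resolution_general F (Module.Flat.isSMulRegular_of_nonZeroDivisors hw)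
      (Module.Flat.isSMulRegular_of_nonZeroDivisors hw) p1 p0 hp1 hp0
  exact ⟨_, _, p.f1, p.f0, rfl, rfl, h_f1, h_f0, (Factorization.freeOn w E1 E0).comp10,
    (Factorization.freeOn w E1 E0).comp01, p.comm1, p.comm0, hs1, hs0, hE, hk1, hk0⟩
end
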